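/- Let κ > 0 be real and let ℓ, m be natural numbers with m ≤ ℓ. Define B_ℓ^m := ∫_0^∞ [γ_ℓ^m · P_ℓ^m(ζ/(2κ) + 1)]² · ζ^{1/2} · e^{−ζ} dζ and C_ℓ^m := (e^{2κ}/(4π²·κ^{2ℓ})) · ((2ℓ+1)·Γ(ℓ+1/2)² / ((ℓ+m)!·(ℓ−m)!)) · Γ(2ℓ + 3/2). Then e^{−2κ} · C_ℓ^m ≤ B_ℓ^m ≤ e^{2κ} · C_ℓ^m. -/

import Mathlib

open scoped Nat
open MeasureTheory

/-- The associated Legendre function of degree `ℓ` and order `m`, for real `z ≥ 1`: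
`P_ℓ^m(z) = (1/(2^ℓ ℓ!)) (z²−1)^{m/2} (d/dx)^{ℓ+m} (x²−1)^ℓ |_{x=z}`. -/
noncomputable def assocLegendre (ℓ m : ℕ) (z : ℝ) : ℝ :=
  (1 / (2 ^ ℓ * (ℓ ! : ℝ))) * (z ^ 2 - 1) ^ ((m : ℝ) / 2) *
    iteratedDeriv (ℓ + m) (fun x : ℝ => (x ^ 2 - 1) ^ ℓ) z

/-- The normalization constant `γ_ℓ^m = [((2ℓ+1)/(4π)) (ℓ−m)!/(ℓ+m)!]^{1/2}`. -/
noncomputable def gammaLM (ℓ m : ℕ) : ℝ :=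
  Real.sqrt (((2 * (ℓ : ℝ) + 1) / (4 * Real.pi)) * (((ℓ - m)! : ℝ) / ((ℓ + m)! : ℝ)))

/-- `B_ℓ^m = ∫_0^∞ [γ_ℓ^m P_ℓ^m(ζ/(2κ)+1)]² ζ^{1/2} e^{−ζ} dζ`. -/
noncomputable def Bint (κ : ℝ) (ℓ m : ℕ) : ℝ :=
  ∫ ζ in Set.Ioi (0 : ℝ),
    (gammaLM ℓ m * assocLegendre ℓ m (ζ / (2 * κ) + 1)) ^ 2 * ζ ^ ((1 : ℝ) / 2) *
      Real.exp (-ζ)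

/-- `C_ℓ^m = (e^{2κ}/(4π²κ^{2ℓ})) ((2ℓ+1)Γ(ℓ+1/2)²/((ℓ+m)!(ℓ−m)!)) Γ(2ℓ+3/2)`. -/
noncomputable def Cconst (κ : ℝ) (ℓ m : ℕ) : ℝ :=
  (Real.exp (2 * κ) / (4 * Real.pi ^ 2 * κ ^ (2 * ℓ))) *
    ((2 * (ℓ : ℝ) + 1) * Real.Gamma ((ℓ : ℝ) + 1 / 2) ^ 2 /
      (((ℓ + m)! : ℝ) * ((ℓ - m)! : ℝ))) *
    Real.Gamma (2 * (ℓ : ℝ) + 3 / 2)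

/-!
The polynomial `(x² − 1)^ℓ` is a product of `2ℓ` linear factors `x − r` with `r = ±1`. To the right
of all roots, every derivative of such a product only grows when roots are moved to the left.
Moving all roots to `1`, respectively to `−1`, gives
`c (z − 1)^ℓ ≤ P_ℓ^m(z) ≤ c (z + 1)^ℓ`, where `c` is the leading coefficient of `P_ℓ^m` at infinity.
For `z = ζ/(2κ) + 1` these bounds are multiples of `ζ^ℓ` and `(ζ + 4κ)^ℓ`, so that `B_ℓ^m` lies
between two Gamma integrals, the second one shifted by `4κ`. The shift costs a factor of at most
`e^{4κ}`, which is distributed evenly over the two bounds by the factor `e^{2κ}` in `C_ℓ^m`.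
-/

section Polynomial

open Polynomial

theorem eval_iterate_derivative_prod_X_sub_C_anti {R ι : Type*} [CommRing R] [LinearOrder R]
    [IsStrictOrderedRing R] {s : Finset ι} {r r' : ι → R} {x : R}
    (hr : ∀ i ∈ s, r i ≤ r' i) (hx : ∀ i ∈ s, r' i ≤ x) (k : ℕ) :
    (derivative^[k] (∏ i ∈ s, (X - C (r' i)))).eval x ≤
      (derivative^[k] (∏ i ∈ s, (X - C (r i)))).eval x := by
  classical
  induction k generalizing s with
  | zero =>
    simp only [Function.iterate_zero, id, eval_prod, eval_sub, eval_X, eval_C]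
    exact Finset.prod_le_prod (fun i hi => sub_nonneg.2 (hx i hi))
      fun i hi => sub_le_sub_left (hr i hi) x
  | succ k ih =>
    simp only [Function.iterate_succ_apply, derivative_prod_finset, derivative_X_sub_C, mul_one,
      iterate_derivative_sum, eval_finsetSum]
    exact Finset.sum_le_sum fun i _ =>
      ih (fun j hj => hr j (Finset.mem_of_mem_erase hj))
        fun j hj => hx j (Finset.mem_of_mem_erase hj)

theorem eval_iterate_derivative_X_sub_C_pow {R : Type*} [CommRing R] (n k : ℕ) (r x : R) :
    (derivative^[k] ((X - C r) ^ n)).eval x = n.descFactorial k * (x - r) ^ (n - k) := by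
  simp [iterate_derivative_X_sub_pow]

theorem iteratedDeriv_polynomial_eval {𝕜 : Type*} [NontriviallyNormedField 𝕜] (p : 𝕜[X]) (k : ℕ) :
    iteratedDeriv k (fun x => p.eval x) = fun x => (derivative^[k] p).eval x := by
  induction k with
  | zero => simp
  | succ k ih =>
    funext x
    rw [iteratedDeriv_succ, ih, Polynomial.deriv, Function.iterate_succ_apply']

theorem X_sq_sub_one_pow_eq_prod {R : Type*} [CommRing R] (ℓ : ℕ) :
    (X ^ 2 - 1 : R[X]) ^ ℓ =
      ∏ i : Fin ℓ ⊕ Fin ℓ, (X - C (Sum.elim (fun _ => 1) (fun _ => -1) i)) := by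
  simp only [Fintype.prod_sum_type, Sum.elim_inl, Sum.elim_inr, Finset.prod_const,
    Finset.card_univ, Fintype.card_fin, map_neg, map_one]
  rw [← mul_pow]
  ring

theorem iteratedDeriv_sq_sub_one_pow (ℓ k : ℕ) (z : ℝ) :
    iteratedDeriv k (fun x : ℝ => (x ^ 2 - 1) ^ ℓ) z =
      (derivative^[k] ((X ^ 2 - 1 : ℝ[X]) ^ ℓ)).eval z := by
  rw [← congrFun (iteratedDeriv_polynomial_eval ((X ^ 2 - 1 : ℝ[X]) ^ ℓ) k) z]
  simp

theorem le_iteratedDeriv_sq_sub_one_pow (ℓ k : ℕ) {z : ℝ} (hz : 1 ≤ z) :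
    (2 * ℓ).descFactorial k * (z - 1) ^ (2 * ℓ - k) ≤
      iteratedDeriv k (fun x : ℝ => (x ^ 2 - 1) ^ ℓ) z := by
  rw [iteratedDeriv_sq_sub_one_pow, X_sq_sub_one_pow_eq_prod,
    ← eval_iterate_derivative_X_sub_C_pow]
  have h := eval_iterate_derivative_prod_X_sub_C_anti (s := Finset.univ)
    (r := Sum.elim (fun _ : Fin ℓ => (1 : ℝ)) (fun _ : Fin ℓ => -1)) (r' := fun _ => 1)
    (by simp) (fun _ _ => hz) k
  simpa [two_mul] using h

theorem iteratedDeriv_sq_sub_one_pow_nonneg (ℓ k : ℕ) {z : ℝ} (hz : 1 ≤ z) :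
    0 ≤ iteratedDeriv k (fun x : ℝ => (x ^ 2 - 1) ^ ℓ) z :=
  (mul_nonneg (Nat.cast_nonneg _) (pow_nonneg (sub_nonneg.2 hz) _)).trans
    (le_iteratedDeriv_sq_sub_one_pow ℓ k hz)

theorem iteratedDeriv_sq_sub_one_pow_le (ℓ k : ℕ) {z : ℝ} (hz : 1 ≤ z) :
    iteratedDeriv k (fun x : ℝ => (x ^ 2 - 1) ^ ℓ) z ≤
      (2 * ℓ).descFactorial k * (z + 1) ^ (2 * ℓ - k) := by
  rw [iteratedDeriv_sq_sub_one_pow, X_sq_sub_one_pow_eq_prod, ← sub_neg_eq_add z 1,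
    ← eval_iterate_derivative_X_sub_C_pow]
  have h := eval_iterate_derivative_prod_X_sub_C_anti (s := Finset.univ)
    (r := fun _ => -1) (r' := Sum.elim (fun _ : Fin ℓ => (1 : ℝ)) (fun _ : Fin ℓ => -1))
    (by simp) (Sum.forall.2 ⟨fun _ _ => hz, fun _ _ => (neg_le_self zero_le_one).trans hz⟩) k
  simpa [two_mul] using h

end Polynomial

section Legendre

variable {ℓ m : ℕ} {z : ℝ}

/-- The leading coefficient of `P_ℓ^m` at infinity: `P_ℓ^m(z) ∼ c z^ℓ` as `z → ∞` if `m ≤ ℓ`.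
For `m > ℓ` it is `0`, as is `P_ℓ^m`. -/
noncomputable def legendreLeadingCoeff (ℓ m : ℕ) : ℝ :=
  (2 * ℓ).descFactorial (ℓ + m) / (2 ^ ℓ * (ℓ ! : ℝ))

theorem legendreLeadingCoeff_nonneg (ℓ m : ℕ) : 0 ≤ legendreLeadingCoeff ℓ m := by
  unfold legendreLeadingCoeff
  positivity

theorem sq_rpow_natCast_div_two {x : ℝ} (hx : 0 ≤ x) (m : ℕ) :
    (x ^ 2) ^ ((m : ℝ) / 2) = x ^ m := by
  rw [← Real.rpow_natCast_mul hx, Nat.cast_ofNat, mul_div_cancel₀ _ two_ne_zero,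
    Real.rpow_natCast]

theorem assocLegendre_nonneg (ℓ m : ℕ) (hz : 1 ≤ z) : 0 ≤ assocLegendre ℓ m z := by
  have hsq : 0 ≤ z ^ 2 - 1 := by nlinarith
  have hderiv := iteratedDeriv_sq_sub_one_pow_nonneg ℓ (ℓ + m) hz
  unfold assocLegendre
  positivity

theorem le_assocLegendre (hm : m ≤ ℓ) (hz : 1 ≤ z) :
    legendreLeadingCoeff ℓ m * (z - 1) ^ ℓ ≤ assocLegendre ℓ m z := by
  have hz' : 0 ≤ z - 1 := sub_nonneg.2 hz
  have hsq : 0 ≤ z ^ 2 - 1 := by nlinarith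
  have hrpow : (z - 1) ^ m ≤ (z ^ 2 - 1) ^ ((m : ℝ) / 2) := by
    rw [← sq_rpow_natCast_div_two hz']
    gcongr
    nlinarith
  have hderiv := le_iteratedDeriv_sq_sub_one_pow ℓ (ℓ + m) hz
  calc legendreLeadingCoeff ℓ m * (z - 1) ^ ℓ
      = 1 / (2 ^ ℓ * (ℓ ! : ℝ)) * (z - 1) ^ m *
          ((2 * ℓ).descFactorial (ℓ + m) * (z - 1) ^ (2 * ℓ - (ℓ + m))) := by
        rw [show 2 * ℓ - (ℓ + m) = ℓ - m by omega, ← pow_mul_pow_sub (z - 1) hm,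
          legendreLeadingCoeff]
        ring
    _ ≤ assocLegendre ℓ m z := by
        unfold assocLegendre
        gcongr

theorem assocLegendre_le (hm : m ≤ ℓ) (hz : 1 ≤ z) :
    assocLegendre ℓ m z ≤ legendreLeadingCoeff ℓ m * (z + 1) ^ ℓ := by
  have hz' : 0 ≤ z + 1 := by linarith
  have hsq : 0 ≤ z ^ 2 - 1 := by nlinarith
  have hrpow : (z ^ 2 - 1) ^ ((m : ℝ) / 2) ≤ (z + 1) ^ m := by
    rw [← sq_rpow_natCast_div_two hz']
    gcongr
    nlinarith
  have hderiv := iteratedDeriv_sq_sub_one_pow_le ℓ (ℓ + m) hz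
  have hderiv_nonneg := iteratedDeriv_sq_sub_one_pow_nonneg ℓ (ℓ + m) hz
  calc assocLegendre ℓ m z
      ≤ 1 / (2 ^ ℓ * (ℓ ! : ℝ)) * (z + 1) ^ m *
          ((2 * ℓ).descFactorial (ℓ + m) * (z + 1) ^ (2 * ℓ - (ℓ + m))) := by
        unfold assocLegendre
        gcongr
    _ = legendreLeadingCoeff ℓ m * (z + 1) ^ ℓ := by
        rw [show 2 * ℓ - (ℓ + m) = ℓ - m by omega, ← pow_mul_pow_sub (z + 1) hm,
          legendreLeadingCoeff]
        ring

theorem continuous_assocLegendre (ℓ m : ℕ) : Continuous (assocLegendre ℓ m) := by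
  have hrpow : Continuous fun z : ℝ => (z ^ 2 - 1) ^ ((m : ℝ) / 2) :=
    Continuous.rpow_const (by fun_prop) fun _ => Or.inr (by positivity)
  have hderiv : Continuous (iteratedDeriv (ℓ + m) fun x : ℝ => (x ^ 2 - 1) ^ ℓ) :=
    ContDiff.continuous_iteratedDeriv' (ℓ + m) (by fun_prop)
  exact (continuous_const.mul hrpow).mul hderiv

end Legendre

section GammaIntegral

variable {a s : ℝ}

theorem add_rpow_mul_exp_neg_eq (a s x : ℝ) :
    (x + a) ^ (s - 1) * Real.exp (-x) =
      Real.exp a * (Real.exp (-(x + a)) * (x + a) ^ (s - 1)) := by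
  rw [← mul_assoc, ← Real.exp_add, show a + -(x + a) = -x by ring, mul_comm]

theorem integrableOn_add_rpow_mul_exp_neg (ha : 0 ≤ a) (hs : 0 < s) :
    IntegrableOn (fun x => (x + a) ^ (s - 1) * Real.exp (-x)) (Set.Ioi 0) := by
  simp only [add_rpow_mul_exp_neg_eq]
  have h := ((measurePreserving_add_right volume a).integrableOn_comp_preimage
    (measurableEmbedding_addRight a)).2
    ((Real.GammaIntegral_convergent hs).mono_set (Set.Ioi_subset_Ioi ha))
  rw [Set.preimage_add_const_Ioi, sub_self] at h
  exact h.const_mul _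

theorem setIntegral_add_rpow_mul_exp_neg_le (ha : 0 ≤ a) (hs : 0 < s) :
    ∫ x in Set.Ioi 0, (x + a) ^ (s - 1) * Real.exp (-x) ≤ Real.exp a * Real.Gamma s := by
  have hshift := (measurePreserving_add_right volume a).setIntegral_preimage_emb
    (measurableEmbedding_addRight a) (fun y => Real.exp (-y) * y ^ (s - 1)) (Set.Ioi a)
  rw [Set.preimage_add_const_Ioi, sub_self] at hshift
  simp only [add_rpow_mul_exp_neg_eq]
  rw [integral_const_mul, hshift, Real.Gamma_eq_integral hs]
  refine mul_le_mul_of_nonneg_left ?_ (Real.exp_pos a).le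
  refine setIntegral_mono_set (Real.GammaIntegral_convergent hs) ?_
    (Set.Ioi_subset_Ioi ha).eventuallyLE
  filter_upwards [ae_restrict_mem measurableSet_Ioi] with x hx
  exact mul_nonneg (Real.exp_pos _).le (Real.rpow_nonneg (Set.mem_Ioi.1 hx).le _)

theorem setIntegral_Ioi_mem_Icc_of_Gamma_integrand_bounds {f : ℝ → ℝ} {K : ℝ} (hK : 0 ≤ K)
    (ha : 0 ≤ a) (hs : 0 < s) (hf : AEStronglyMeasurable f (volume.restrict (Set.Ioi 0)))
    (hlower : ∀ x, 0 < x → K * (x ^ (s - 1) * Real.exp (-x)) ≤ f x)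
    (hupper : ∀ x, 0 < x → f x ≤ K * ((x + a) ^ (s - 1) * Real.exp (-x))) :
    ∫ x in Set.Ioi 0, f x ∈ Set.Icc (K * Real.Gamma s) (K * (Real.exp a * Real.Gamma s)) := by
  have hlower_int : IntegrableOn (fun x => K * (x ^ (s - 1) * Real.exp (-x))) (Set.Ioi 0) := by
    simpa only [IntegrableOn, add_zero] using
      (integrableOn_add_rpow_mul_exp_neg le_rfl hs).const_mul K
  have hupper_int := (integrableOn_add_rpow_mul_exp_neg ha hs).const_mul K
  have hf_int : IntegrableOn f (Set.Ioi 0) :=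
    integrable_of_le_of_le hf (ae_restrict_of_forall_mem measurableSet_Ioi hlower)
      (ae_restrict_of_forall_mem measurableSet_Ioi hupper) hlower_int hupper_int
  constructor
  · calc K * Real.Gamma s = ∫ x in Set.Ioi 0, K * (x ^ (s - 1) * Real.exp (-x)) := by
          simp only [Real.Gamma_eq_integral hs, integral_const_mul, mul_comm (Real.exp _)]
      _ ≤ ∫ x in Set.Ioi 0, f x :=
          setIntegral_mono_on hlower_int hf_int measurableSet_Ioi hlower
  · calc ∫ x in Set.Ioi 0, f x
        ≤ ∫ x in Set.Ioi 0, K * ((x + a) ^ (s - 1) * Real.exp (-x)) :=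
          setIntegral_mono_on hf_int hupper_int measurableSet_Ioi hupper
      _ ≤ K * (Real.exp a * Real.Gamma s) := by
          rw [integral_const_mul]
          gcongr
          exact setIntegral_add_rpow_mul_exp_neg_le ha hs

end GammaIntegral

section Bint

variable {κ : ℝ} {ℓ m : ℕ}

/-- The coefficient of `ζ^{2ℓ}` in the expansion of `[γ_ℓ^m P_ℓ^m(ζ/(2κ) + 1)]²` as `ζ → ∞`. -/
noncomputable def bintLeadingCoeff (κ : ℝ) (ℓ m : ℕ) : ℝ :=
  (gammaLM ℓ m * (legendreLeadingCoeff ℓ m / (2 * κ) ^ ℓ)) ^ 2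

theorem Gamma_natCast_add_half_eq_factorial (n : ℕ) :
    Real.Gamma (n + 1 / 2) = (2 * n)! * √Real.pi / (4 ^ n * n !) := by
  have hfactorial : (2 * n)! = 2 ^ n * n ! * (2 * n - 1)‼ := by
    cases n with
    | zero => simp
    | succ n =>
      rw [← Nat.doubleFactorial_two_mul]
      exact Nat.factorial_eq_mul_doubleFactorial (2 * n + 1)
  rw [Real.Gamma_nat_add_half, hfactorial, show (4 : ℝ) = 2 * 2 by norm_num, mul_pow]
  push_cast
  field_simp

theorem Cconst_eq (κ : ℝ) (hm : m ≤ ℓ) :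
    Cconst κ ℓ m =
      Real.exp (2 * κ) * (bintLeadingCoeff κ ℓ m * Real.Gamma (2 * ℓ + 3 / 2)) := by
  have hfactorial : ((2 * ℓ)! : ℝ) = (ℓ - m)! * (2 * ℓ).descFactorial (ℓ + m) := by
    rw [← Nat.factorial_mul_descFactorial (show ℓ + m ≤ 2 * ℓ by omega),
      show 2 * ℓ - (ℓ + m) = ℓ - m by omega, Nat.cast_mul]
  have hfour : (4 : ℝ) ^ ℓ = (2 ^ ℓ) ^ 2 := by
    rw [pow_right_comm]
    norm_num
  have hgamma : gammaLM ℓ m ^ 2 =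
      (2 * (ℓ : ℝ) + 1) / (4 * Real.pi) * (((ℓ - m)! : ℝ) / ((ℓ + m)! : ℝ)) :=
    Real.sq_sqrt (by positivity)
  rw [Cconst, bintLeadingCoeff, legendreLeadingCoeff, Gamma_natCast_add_half_eq_factorial,
    hfactorial, hfour, mul_pow 2 κ, pow_mul' κ 2 ℓ, mul_pow (gammaLM ℓ m), hgamma, div_pow _ _ 2,
    mul_pow _ √Real.pi, Real.sq_sqrt Real.pi_pos.le]
  field_simp

theorem rpow_two_mul_add_three_halves_sub_one {x : ℝ} (hx : 0 < x) (ℓ : ℕ) :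
    x ^ (2 * (ℓ : ℝ) + 3 / 2 - 1) = (x ^ ℓ) ^ 2 * x ^ ((1 : ℝ) / 2) := by
  rw [← pow_mul, ← Real.rpow_natCast, ← Real.rpow_add hx]
  push_cast
  ring_nf

theorem le_Bint_integrand (hκ : 0 < κ) (hm : m ≤ ℓ) {x : ℝ} (hx : 0 < x) :
    bintLeadingCoeff κ ℓ m * (x ^ (2 * (ℓ : ℝ) + 3 / 2 - 1) * Real.exp (-x)) ≤
      (gammaLM ℓ m * assocLegendre ℓ m (x / (2 * κ) + 1)) ^ 2 * x ^ ((1 : ℝ) / 2) *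
        Real.exp (-x) := by
  have hleg : legendreLeadingCoeff ℓ m * (x / (2 * κ)) ^ ℓ ≤
      assocLegendre ℓ m (x / (2 * κ) + 1) := by
    simpa using le_assocLegendre hm (le_add_of_nonneg_left (by positivity : 0 ≤ x / (2 * κ)))
  have hγ : 0 ≤ gammaLM ℓ m := Real.sqrt_nonneg _
  have hc := legendreLeadingCoeff_nonneg ℓ m
  calc bintLeadingCoeff κ ℓ m * (x ^ (2 * (ℓ : ℝ) + 3 / 2 - 1) * Real.exp (-x))
      = (gammaLM ℓ m * (legendreLeadingCoeff ℓ m * (x / (2 * κ)) ^ ℓ)) ^ 2 * x ^ ((1 : ℝ) / 2) *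
          Real.exp (-x) := by
        rw [rpow_two_mul_add_three_halves_sub_one hx, bintLeadingCoeff, div_pow]
        ring
    _ ≤ _ := by gcongr

theorem Bint_integrand_le (hκ : 0 < κ) (hm : m ≤ ℓ) {x : ℝ} (hx : 0 < x) :
    (gammaLM ℓ m * assocLegendre ℓ m (x / (2 * κ) + 1)) ^ 2 * x ^ ((1 : ℝ) / 2) *
        Real.exp (-x) ≤
      bintLeadingCoeff κ ℓ m *
        ((x + 4 * κ) ^ (2 * (ℓ : ℝ) + 3 / 2 - 1) * Real.exp (-x)) := by
  have hz : 1 ≤ x / (2 * κ) + 1 := le_add_of_nonneg_left (by positivity)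
  have hleg : assocLegendre ℓ m (x / (2 * κ) + 1) ≤
      legendreLeadingCoeff ℓ m * ((x + 4 * κ) / (2 * κ)) ^ ℓ := by
    convert assocLegendre_le hm hz using 3
    field_simp
    ring
  have hleg_nonneg := assocLegendre_nonneg ℓ m hz
  have hγ : 0 ≤ gammaLM ℓ m := Real.sqrt_nonneg _
  calc _ ≤ (gammaLM ℓ m * (legendreLeadingCoeff ℓ m * ((x + 4 * κ) / (2 * κ)) ^ ℓ)) ^ 2 *
          (x + 4 * κ) ^ ((1 : ℝ) / 2) * Real.exp (-x) := by
        gcongr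
        linarith
    _ = _ := by
        rw [rpow_two_mul_add_three_halves_sub_one (by positivity), bintLeadingCoeff, div_pow]
        ring

theorem Bint_mem_Icc (hκ : 0 < κ) (hm : m ≤ ℓ) :
    Bint κ ℓ m ∈ Set.Icc (bintLeadingCoeff κ ℓ m * Real.Gamma (2 * ℓ + 3 / 2))
      (bintLeadingCoeff κ ℓ m * (Real.exp (4 * κ) * Real.Gamma (2 * ℓ + 3 / 2))) := by
  have hleg := continuous_assocLegendre ℓ m
  have hsqrt : Continuous fun x : ℝ => x ^ ((1 : ℝ) / 2) :=
    Real.continuous_rpow_const (by norm_num)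
  exact setIntegral_Ioi_mem_Icc_of_Gamma_integrand_bounds (sq_nonneg _) (by positivity)
    (by positivity) (Continuous.aestronglyMeasurable (by fun_prop))
    (fun _ hx => le_Bint_integrand hκ hm hx) fun _ hx => Bint_integrand_le hκ hm hx

end Bint

/-- Two-sided bounds `e^{−2κ} C_ℓ^m ≤ B_ℓ^m ≤ e^{2κ} C_ℓ^m`
(from the proof of Lemma 5.4 of the paper). -/
theorem Bint_two_sided_bound (κ : ℝ) (hκ : 0 < κ) (ℓ m : ℕ) (hm : m ≤ ℓ) :
    Real.exp (-(2 * κ)) * Cconst κ ℓ m ≤ Bint κ ℓ m ∧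
      Bint κ ℓ m ≤ Real.exp (2 * κ) * Cconst κ ℓ m := by
  obtain ⟨hlower, hupper⟩ := Bint_mem_Icc hκ hm
  rw [Cconst_eq κ hm]
  constructor
  · rwa [← mul_assoc, ← Real.exp_add, neg_add_cancel, Real.exp_zero, one_mul]
  · rwa [← mul_assoc, ← Real.exp_add, show 2 * κ + 2 * κ = 4 * κ by ring, mul_left_comm]
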